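/- Fix μ ∈ ℝ^n. Let U be a block-diagonal orthogonal matrix (U^{ij} = 0 whenever μ_i ≠ μ_j), let M be a symmetric matrix, and h ∈ ℝ^n a vector with UᵀM_in U = Diag h. Then for any μ-block-constant (k+1)-tensor T on ℝ^n, any matrices H₁,…,H_k, and any permutation σ on {1,…,k}: ⟨T[h], H̃₁ ∘_σ ⋯ ∘_σ H̃_k⟩ = ⟨T, H₁ ∘_{σ_{(k+1)}} ⋯ ∘_{σ_{(k+1)}} H_k ∘_{σ_{(k+1)}} M_in⟩, where H̃_i = UᵀH_iU. -/

import Mathlib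

open scoped BigOperators
open Filter Asymptotics Matrix

attribute [local instance] Matrix.normedAddCommGroup

noncomputable section

/-- A `k`-tensor on `ℝ^n`, identified with its array of entries. -/
abbrev Tensor (k n : ℕ) : Type := (Fin k → Fin n) → ℝ

/-- A `2k`-tensor on `ℝ^n`, with its indices grouped into two groups of `k`. -/
abbrev Tensor2 (k n : ℕ) : Type := (Fin k → Fin n) → (Fin k → Fin n) → ℝ

/-- The `σ`-Hadamard product of `k` matrices:
`(H₁ ∘_σ ⋯ ∘_σ H_k)^{i₁…i_k} = ∏ s, H_s^{i_s i_{σ⁻¹(s)}}`. -/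
def hadamardProd {k n : ℕ} (σ : Equiv.Perm (Fin k))
    (H : Fin k → Matrix (Fin n) (Fin n) ℝ) : Tensor k n :=
  fun i => ∏ s, H s (i s) (i (σ⁻¹ s))

/-- The dot product of two `k`-tensors. -/
def tdot {k n : ℕ} (T₁ T₂ : Tensor k n) : ℝ :=
  ∑ p : Fin k → Fin n, T₁ p * T₂ p

/-- `Diag^σ T`, the `2k`-tensor equal to `T^{i₁…i_k}` when `i_s = j_{σ(s)}` for all `s`,
and `0` otherwise. -/
def diagPerm {k n : ℕ} (σ : Equiv.Perm (Fin k)) (T : Tensor k n) : Tensor2 k n :=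
  fun i j => if ∀ s, i s = j (σ s) then T i else 0

/-- A `2k`-tensor viewed as a `k`-tensor on matrix arguments:
`S[H₁,…,H_k] = ∑_{p,q} S^{p₁…p_k}_{q₁…q_k} ∏ s, H_s^{p_s q_s}`. -/
def apply2 {k n : ℕ} (S : Tensor2 k n)
    (H : Fin k → Matrix (Fin n) (Fin n) ℝ) : ℝ :=
  ∑ p : Fin k → Fin n, ∑ q : Fin k → Fin n, S p q * ∏ s, H s (p s) (q s)

/-- Conjugation `U S Uᵀ` of a `2k`-tensor `S` by a matrix `U`. -/
def conj2 {k n : ℕ} (U : Matrix (Fin n) (Fin n) ℝ) (S : Tensor2 k n) : Tensor2 k n :=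
  fun i j => ∑ p : Fin k → Fin n, ∑ q : Fin k → Fin n,
    S p q * ((∏ s, U (i s) (p s)) * ∏ s, U (j s) (q s))

/-- For a `2(k+1)`-tensor `S` viewed as a `(k+1)`-tensor on matrices, `S[H]` fixes the last
matrix argument to `H`, producing a `2k`-tensor. -/
def lastApply {k n : ℕ} (S : Tensor2 (k+1) n)
    (H : Matrix (Fin n) (Fin n) ℝ) : Tensor2 k n :=
  fun i j => ∑ a : Fin n, ∑ b : Fin n, S (Fin.snoc i a) (Fin.snoc j b) * H a b

/-- `T[x]`: contraction of the last index of a `(k+1)`-tensor against a vector. -/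
def contract {k n : ℕ} (T : Tensor (k+1) n) (x : Fin n → ℝ) : Tensor k n :=
  fun i => ∑ a : Fin n, T (Fin.snoc i a) * x a

/-- A permutation `σ` of `{1,…,k}` viewed as a permutation of `{1,…,k+1}` fixing `k+1`. -/
def extPerm {k : ℕ} (σ : Equiv.Perm (Fin k)) : Equiv.Perm (Fin (k+1)) :=
  (Equiv.permCongr finSuccEquivLast).symm σ.optionCongr

/-- `σ_{(l)} := σ ∘ τ_l`, where `τ_l` is the transposition `(l, k+1)` (and `σ` fixes `k+1`).
Here `l : Fin (k+1)`; taking `l = Fin.last k` gives `σ_{(k+1)} = σ`. -/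
def permIns {k : ℕ} (σ : Equiv.Perm (Fin k)) (l : Fin (k+1)) : Equiv.Perm (Fin (k+1)) :=
  extPerm σ * Equiv.swap l (Fin.last k)

/-- A tensor is `μ`-block-constant if its entries agree on componentwise `μ`-equivalent
multi-indices (`i ∼ j` iff `μ i = μ j`). -/
def BlockConstant {k n : ℕ} (μ : Fin n → ℝ) (T : Tensor k n) : Prop :=
  ∀ i j : Fin k → Fin n, (∀ s, μ (i s) = μ (j s)) → T i = T j

/-- `H_in`: the diagonal-block part of `H` (w.r.t. the blocks of `μ`). -/
def matIn {n : ℕ} (μ : Fin n → ℝ) (H : Matrix (Fin n) (Fin n) ℝ) :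
    Matrix (Fin n) (Fin n) ℝ :=
  Matrix.of fun i j => if μ i = μ j then H i j else 0

/-- `H_out = H - H_in`: the off-diagonal-block part of `H`. -/
def matOut {n : ℕ} (μ : Fin n → ℝ) (H : Matrix (Fin n) (Fin n) ℝ) :
    Matrix (Fin n) (Fin n) ℝ :=
  H - matIn μ H

/-- The divided-difference tensor `T^{(l)}_out` of a `k`-tensor `T`, a `(k+1)`-tensor. -/
def outDD {k n : ℕ} (μ : Fin n → ℝ) (T : Tensor k n) (l : Fin k) : Tensor (k+1) n :=
  fun i => if μ (i l.castSucc) = μ (i (Fin.last k)) then 0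
    else (T (Function.update (fun s => i s.castSucc) l (i (Fin.last k)))
          - T (fun s => i s.castSucc)) / (μ (i (Fin.last k)) - μ (i l.castSucc))

/-- `T^{τ_l}`: the `(k+1)`-tensor equal to `T^{i₁…i_k}` on the hyperplane `i_l = i_{k+1}`
and `0` elsewhere. -/
def liftTau {k n : ℕ} (T : Tensor k n) (l : Fin k) : Tensor (k+1) n :=
  fun i => if i l.castSucc = i (Fin.last k) then T (fun s => i s.castSucc) else 0

/-- `T^{τ_l}_in`: the "inflated" `(k+1)`-tensor, equal to
`T^{i₁…i_{l-1} i_{k+1} i_{l+1}…i_k}` when `μ_{i_l} = μ_{i_{k+1}}` and `0` otherwise. -/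
def liftTauIn {k n : ℕ} (μ : Fin n → ℝ) (T : Tensor k n) (l : Fin k) : Tensor (k+1) n :=
  fun i => if μ (i l.castSucc) = μ (i (Fin.last k))
    then T (Function.update (fun s => i s.castSucc) l (i (Fin.last k))) else 0

/-- `lam` is the map sending each symmetric matrix to the vector of its eigenvalues
ordered nonincreasingly: it is nonincreasing and realized by an orthogonal
diagonalization. -/
def IsEigCF {n : ℕ} (lam : Matrix (Fin n) (Fin n) ℝ → Fin n → ℝ) : Prop :=
  ∀ A : Matrix (Fin n) (Fin n) ℝ, A.IsSymm →
    Antitone (lam A) ∧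
    ∃ U : Matrix (Fin n) (Fin n) ℝ, Uᵀ * U = 1 ∧
      A = U * Matrix.diagonal (lam A) * Uᵀ

/-- `h` is the concatenated vector `(λ(X₁ᵀ A X₁), …, λ(X_rᵀ A X_r))` of the nonincreasingly
ordered eigenvalues of the diagonal blocks of `A` (blocks determined by `μ`):
equivalently, `h` is nonincreasing within each block of `μ` and `Diag h` is obtained from
`A_in` by conjugating with a block-diagonal orthogonal matrix. -/
def IsBlockEig {n : ℕ} (μ : Fin n → ℝ) (A : Matrix (Fin n) (Fin n) ℝ)
    (h : Fin n → ℝ) : Prop :=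
  (∀ i j : Fin n, i ≤ j → μ i = μ j → h j ≤ h i) ∧
  ∃ V : Matrix (Fin n) (Fin n) ℝ, Vᵀ * V = 1 ∧
    (∀ i j, μ i ≠ μ j → V i j = 0) ∧
    Vᵀ * matIn μ A * V = Matrix.diagonal h

/-!
Write `K A = A₁ ⊗ ⋯ ⊗ A_k` for the Kronecker product, `D` for the diagonal matrix on `(ℝⁿ)^⊗k`
with the entries of `T`, and `P` for the matrix permuting the tensor factors by `σ`. Then
`⟨T, H₁ ∘_σ ⋯ ∘_σ H_k⟩ = tr (D · K H · P)`. A tensor power of `U` commutes with `P`, and it commutes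
with `D` when `U` is block-diagonal and `T` is block-constant. By cyclicity of the trace, the
pairing is therefore unchanged when every `H_s` is replaced by `U⁻¹ H_s U`. Contracting a
`(k+1)`-tensor with `h` amounts to adding `Diag h` as a last Hadamard factor, on an index fixed by
the permutation, so the theorem is this invariance for the factors `H₁, …, H_k, M_in`.
-/

section PiKronecker

variable {ι l m n R : Type*} [Fintype ι] [CommSemiring R]

/-- The Kronecker product of a family of matrices, with rows and columns indexed by functions on
the index type of the family: the matrix of the tensor product of the linear maps `A s`. -/
def piKronecker (A : ι → Matrix m n R) : Matrix (ι → m) (ι → n) R :=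
  of fun p q => ∏ s, A s (p s) (q s)

theorem piKronecker_apply (A : ι → Matrix m n R) (p : ι → m) (q : ι → n) :
    piKronecker A p q = ∏ s, A s (p s) (q s) :=
  rfl

theorem piKronecker_one [DecidableEq n] : piKronecker (fun _ : ι => (1 : Matrix n n R)) = 1 := by
  ext p q
  simp only [piKronecker_apply, one_apply, Fintype.prod_boole, funext_iff]

theorem piKronecker_mul [DecidableEq ι] [Fintype m] (A : ι → Matrix l m R) (B : ι → Matrix m n R) :
    piKronecker (fun s => A s * B s) = piKronecker A * piKronecker B := by
  ext p q
  simp only [piKronecker_apply, mul_apply, Fintype.prod_sum, Finset.prod_mul_distrib]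

theorem commute_diagonal_piKronecker [DecidableEq ι] [Fintype n] [DecidableEq n] {T : (ι → n) → R}
    {A : ι → Matrix n n R} (hT : ∀ p q, (∀ s, A s (p s) (q s) ≠ 0) → T p = T q) :
    Commute (diagonal T) (piKronecker A) := by
  refine Matrix.ext fun p q => ?_
  rw [diagonal_mul, mul_diagonal, piKronecker_apply, mul_comm]
  by_cases hpq : ∀ s, A s (p s) (q s) ≠ 0
  · rw [hT p q hpq]
  · obtain ⟨s, hs⟩ : ∃ s, A s (p s) (q s) = 0 := by simpa only [not_forall, not_not] using hpq
    rw [Finset.prod_eq_zero (Finset.mem_univ s) hs, zero_mul, zero_mul]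

variable [DecidableEq n]

variable (n R) in
/-- The matrix permuting the factors of a tensor power according to `σ`. Its row `p` has its only
nonzero entry in column `p ∘ σ`. -/
def factorPerm (σ : Equiv.Perm ι) : Matrix (ι → n) (ι → n) R :=
  Equiv.Perm.permMatrix R (σ.symm.arrowCongr (Equiv.refl n))

variable [DecidableEq ι] [Fintype n]

theorem piKronecker_mul_factorPerm_apply (A : ι → Matrix m n R) (σ : Equiv.Perm ι) (p : ι → m)
    (q : ι → n) : (piKronecker A * factorPerm n R σ) p q = ∏ s, A s (p s) (q (σ⁻¹ s)) := by
  rw [factorPerm, PEquiv.mul_toMatrix_toPEquiv]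
  rfl

theorem factorPerm_mul_piKronecker_apply (A : ι → Matrix n m R) (σ : Equiv.Perm ι) (p : ι → n)
    (q : ι → m) : (factorPerm n R σ * piKronecker A) p q = ∏ s, A s (p (σ s)) (q s) := by
  rw [factorPerm, PEquiv.toMatrix_toPEquiv_mul]
  rfl

theorem piKronecker_mul_factorPerm [DecidableEq m] [Fintype m] (A : ι → Matrix m n R)
    (σ : Equiv.Perm ι) :
    piKronecker A * factorPerm n R σ = factorPerm m R σ * piKronecker (A ∘ σ) := by
  ext p q
  rw [piKronecker_mul_factorPerm_apply, factorPerm_mul_piKronecker_apply, ← Equiv.prod_comp σ]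
  simp

end PiKronecker

section Hadamard

variable {k n : ℕ}

theorem tdot_hadamardProd_eq_trace (T : Tensor k n) (σ : Equiv.Perm (Fin k))
    (H : Fin k → Matrix (Fin n) (Fin n) ℝ) :
    tdot T (hadamardProd σ H) = trace (diagonal T * (piKronecker H * factorPerm (Fin n) ℝ σ)) := by
  simp only [tdot, hadamardProd, trace, diag_apply, diagonal_mul, piKronecker_mul_factorPerm_apply]

theorem BlockConstant.commute_piKronecker {μ : Fin n → ℝ} {T : Tensor k n}
    (hT : BlockConstant μ T) {U : Matrix (Fin n) (Fin n) ℝ} (hU : ∀ i j, μ i ≠ μ j → U i j = 0) :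
    Commute (diagonal T) (piKronecker fun _ => U) :=
  commute_diagonal_piKronecker fun p q hpq =>
    hT p q fun s => not_imp_comm.1 (hU _ _) (hpq s)

theorem BlockConstant.tdot_hadamardProd_conj {μ : Fin n → ℝ} {T : Tensor k n}
    (hT : BlockConstant μ T) {U V : Matrix (Fin n) (Fin n) ℝ} (hUV : U * V = 1)
    (hU : ∀ i j, μ i ≠ μ j → U i j = 0) (H : Fin k → Matrix (Fin n) (Fin n) ℝ)
    (σ : Equiv.Perm (Fin k)) :
    tdot T (hadamardProd σ fun s => V * H s * U) = tdot T (hadamardProd σ H) := by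
  set K := piKronecker (ι := Fin k) fun _ => U with hK
  set L := piKronecker (ι := Fin k) fun _ => V with hL
  set D := diagonal T
  set P := factorPerm (Fin n) ℝ σ
  have hKD : D * K = K * D := hT.commute_piKronecker hU
  have hKP : K * P = P * K := piKronecker_mul_factorPerm (fun _ => U) σ
  have hKL : K * L = 1 := by
    rw [hK, hL, ← piKronecker_mul, hUV, piKronecker_one]
  rw [tdot_hadamardProd_eq_trace, tdot_hadamardProd_eq_trace, piKronecker_mul, piKronecker_mul]
  calc trace (D * (L * piKronecker H * K * P))
      = trace (D * L * piKronecker H * P * K) := by simp only [Matrix.mul_assoc, hKP]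
    _ = trace (K * D * L * (piKronecker H * P)) := by
      rw [trace_mul_comm]
      simp only [Matrix.mul_assoc]
    _ = trace (D * (piKronecker H * P)) := by
      rw [← hKD, Matrix.mul_assoc D, hKL, Matrix.mul_one]

theorem extPerm_last (σ : Equiv.Perm (Fin k)) : extPerm σ (Fin.last k) = Fin.last k := by
  simp [extPerm]

theorem extPerm_castSucc (σ : Equiv.Perm (Fin k)) (s : Fin k) :
    extPerm σ s.castSucc = (σ s).castSucc := by
  simp [extPerm]

theorem extPerm_inv (σ : Equiv.Perm (Fin k)) : (extPerm σ)⁻¹ = extPerm σ⁻¹ :=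
  rfl

theorem hadamardProd_extPerm_snoc (σ : Equiv.Perm (Fin k)) (H : Fin k → Matrix (Fin n) (Fin n) ℝ)
    (A : Matrix (Fin n) (Fin n) ℝ) (p : Fin k → Fin n) (a : Fin n) :
    hadamardProd (extPerm σ) (Fin.snoc H A) (Fin.snoc p a) = hadamardProd σ H p * A a a := by
  simp only [hadamardProd, extPerm_inv, Fin.prod_univ_castSucc, extPerm_castSucc, extPerm_last,
    Fin.snoc_castSucc, Fin.snoc_last]

theorem tdot_eq_sum_snoc (T₁ T₂ : Tensor (k + 1) n) :
    tdot T₁ T₂ = ∑ p : Fin k → Fin n, ∑ a, T₁ (Fin.snoc p a) * T₂ (Fin.snoc p a) := by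
  rw [tdot, ← (Fin.snocEquiv fun _ => Fin n).sum_comp, Fintype.sum_prod_type_right]
  rfl

theorem tdot_contract_hadamardProd (T : Tensor (k + 1) n) (h : Fin n → ℝ) (σ : Equiv.Perm (Fin k))
    (H : Fin k → Matrix (Fin n) (Fin n) ℝ) :
    tdot (contract T h) (hadamardProd σ H)
      = tdot T (hadamardProd (extPerm σ) (Fin.snoc H (diagonal h))) := by
  rw [tdot_eq_sum_snoc]
  simp only [tdot, contract, Finset.sum_mul, hadamardProd_extPerm_snoc, diagonal_apply_eq]
  exact Finset.sum_congr rfl fun p _ => Finset.sum_congr rfl fun a _ => by ring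

end Hadamard

theorem statement12_general {n k : ℕ} {μ : Fin n → ℝ} {U V A : Matrix (Fin n) (Fin n) ℝ}
    (hVU : V * U = 1) (hU : ∀ i j, μ i ≠ μ j → U i j = 0) {h : Fin n → ℝ}
    (hA : V * A * U = diagonal h) {T : Tensor (k + 1) n} (hT : BlockConstant μ T)
    (H : Fin k → Matrix (Fin n) (Fin n) ℝ) (σ : Equiv.Perm (Fin k)) :
    tdot (contract T h) (hadamardProd σ fun s => V * H s * U)
      = tdot T (hadamardProd (extPerm σ) (Fin.snoc H A)) := by
  have conj_snoc : (Fin.snoc (fun s => V * H s * U) (diagonal h) : Fin (k + 1) → Matrix _ _ ℝ)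
      = fun s => V * (Fin.snoc H A : Fin (k + 1) → Matrix _ _ ℝ) s * U := by
    rw [← hA]
    exact (Fin.comp_snoc (fun B => V * B * U) H A).symm
  rw [tdot_contract_hadamardProd, conj_snoc,
    hT.tdot_hadamardProd_conj (mul_eq_one_comm.1 hVU) hU]

/-- Theorem `dec15a`, part 1. Fix `μ`. Let `U` be a block-diagonal
orthogonal matrix, `M` symmetric, and `h` with `UᵀM_in U = Diag h`. For any
`μ`-block-constant `(k+1)`-tensor `T`, matrices `H₁,…,H_k`, and permutation `σ`:
`⟨T[h], H̃₁ ∘_σ ⋯ ∘_σ H̃_k⟩ = ⟨T, H₁ ∘_{σ_{(k+1)}} ⋯ ∘_{σ_{(k+1)}} H_k ∘_{σ_{(k+1)}} M_in⟩`,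
where `H̃ᵢ = UᵀHᵢU` (and `σ_{(k+1)} = extPerm σ`). -/
theorem statement12 {n k : ℕ} (μ : Fin n → ℝ)
    (U : Matrix (Fin n) (Fin n) ℝ) (hU : Uᵀ * U = 1)
    (hUb : ∀ i j : Fin n, μ i ≠ μ j → U i j = 0)
    (M : Matrix (Fin n) (Fin n) ℝ) (hM : M.IsSymm)
    (h : Fin n → ℝ) (hh : Uᵀ * matIn μ M * U = Matrix.diagonal h)
    (T : Tensor (k+1) n) (hT : BlockConstant μ T)
    (H : Fin k → Matrix (Fin n) (Fin n) ℝ) (σ : Equiv.Perm (Fin k)) :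
    tdot (contract T h) (hadamardProd σ (fun s => Uᵀ * H s * U))
      = tdot T (hadamardProd (extPerm σ) (Fin.snoc H (matIn μ M))) :=
  statement12_general hU hUb hh hT H σ

end
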